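/- Let α, β, λ > 0 and let F(x) = 1 - exp(-λ·exp(exp(α x - β/x))) be the EFWE cdf. Suppose q is a real number with 1 - exp(-λ) < q < 1, and set k(q) = ln(ln(-ln(1-q)/λ)). Then the number x = (k(q) + √(k(q)² + 4αβ))/(2α) satisfies x > 0 and F(x) = q. -/

import Mathlib

/-- For `1 - e^{-λ} < q < 1` and `k(q) = ln(ln(-ln(1-q)/λ))`, the number
`x = (k(q) + √(k(q)² + 4αβ))/(2α)` is positive and satisfies `F(x) = q` for the EFWE cdf `F`. -/
theorem efwe_quantile_formula (α β lam q : ℝ) (hα : 0 < α) (hβ : 0 < β) (hlam : 0 < lam)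
    (hq1 : 1 - Real.exp (-lam) < q) (hq2 : q < 1) :
    0 < (Real.log (Real.log (-Real.log (1 - q) / lam)) +
          Real.sqrt (Real.log (Real.log (-Real.log (1 - q) / lam)) ^ 2 + 4 * α * β)) / (2 * α) ∧
      1 - Real.exp (-(lam * Real.exp (Real.exp (α *
          ((Real.log (Real.log (-Real.log (1 - q) / lam)) +
            Real.sqrt (Real.log (Real.log (-Real.log (1 - q) / lam)) ^ 2 + 4 * α * β)) / (2 * α)) -
        β / ((Real.log (Real.log (-Real.log (1 - q) / lam)) +
            Real.sqrt (Real.log (Real.log (-Real.log (1 - q) / lam)) ^ 2 + 4 * α * β)) /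
          (2 * α)))))) = q := by
  have h1 : Real.log (1 - q) < -lam := by
    rw [Real.log_lt_iff_lt_exp (by linarith)]; linarith
  have hy : 1 < -Real.log (1 - q) / lam := by
    rw [lt_div_iff₀ hlam]; linarith
  have hl : 0 < Real.log (-Real.log (1 - q) / lam) := Real.log_pos hy
  have hF : Real.exp (-(lam * Real.exp (Real.exp
      (Real.log (Real.log (-Real.log (1 - q) / lam)))))) = 1 - q := by
    rw [Real.exp_log hl, Real.exp_log (by linarith), mul_div_cancel₀ _ hlam.ne', neg_neg,
      Real.exp_log (by linarith)]
  generalize Real.log (Real.log (-Real.log (1 - q) / lam)) = k at hF ⊢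
  have hab : 0 < α * β := mul_pos hα hβ
  have hs : Real.sqrt (k ^ 2 + 4 * α * β) ^ 2 = k ^ 2 + 4 * α * β :=
    Real.sq_sqrt (by nlinarith [sq_nonneg k])
  have hs0 : 0 ≤ Real.sqrt (k ^ 2 + 4 * α * β) := Real.sqrt_nonneg _
  generalize Real.sqrt (k ^ 2 + 4 * α * β) = s at hs hs0 ⊢
  have hpos : 0 < k + s := by
    have : |k| < s := abs_lt_of_sq_lt_sq (by nlinarith) hs0
    linarith [neg_abs_le k]
  have hx : α * ((k + s) / (2 * α)) - β / ((k + s) / (2 * α)) = k := by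
    have := hpos.ne'
    field_simp
    nlinarith
  refine ⟨by positivity, ?_⟩
  rw [hx, hF]
  ring
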